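/- Let d ≥ 1 and k ≥ 2, and suppose ℤ^d is the disjoint union of k cosets T_1, …, T_k, where T_j = v_j + ∏_{i=1}^d n_{j,i}ℤ with n_{j,i} positive integers. Let j be an index maximizing ∏_{i=1}^d n_{j,i} over all j. Then there exists j' ≠ j such that n_{j,i} divides n_{j',i} for every i = 1, …, d. -/

import Mathlib

open scoped BigOperators

lemma shift_sum_aux (f : ℕ → ℂ) (N : ℕ) (hf : ∀ x, f (x + N) = f x) (m : ℕ) :
    ∑ x ∈ Finset.range N, f (x + m) = ∑ x ∈ Finset.range N, f x := by
  induction m with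
  | zero => simp
  | succ m ih =>
    rw [← ih]
    have h1 := Finset.sum_range_succ (fun x => f (x + m)) N
    have h2 := Finset.sum_range_succ' (fun x => f (x + m)) N
    rw [h1] at h2
    have h3 : f (N + m) = f (0 + m) := by rw [add_comm N m, hf, zero_add]
    simp only [h3] at h2
    have h4 := add_right_cancel h2
    rw [h4]
    refine Finset.sum_congr rfl fun x _ => ?_
    congr 1
    ring

/-- One-dimensional character sum over a residue class. -/
noncomputable def charSum (N n : ℕ) (v : ℤ) (z : ℂ) : ℂ :=
  ∑ x ∈ Finset.range N, if (n : ℤ) ∣ (x : ℤ) - v then z ^ x else 0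

lemma charSum_zero (N n : ℕ) (v : ℤ) (z : ℂ) (hnN : n ∣ N) (hN : z ^ N = 1) (hz : z ^ n ≠ 1) :
    charSum N n v z = 0 := by
  have hdvd : ∀ (x m : ℕ), n ∣ m → ((n : ℤ) ∣ ((x + m : ℕ) : ℤ) - v ↔ (n : ℤ) ∣ (x : ℤ) - v) := by
    intro x m hm
    have : (n : ℤ) ∣ (m : ℤ) := by exact_mod_cast hm
    have e : ((x + m : ℕ) : ℤ) - v = ((x : ℤ) - v) + m := by push_cast; ring
    rw [e, dvd_add_left this]
  have h := shift_sum_aux (fun x : ℕ => if (n : ℤ) ∣ (x : ℤ) - v then z ^ x else 0) N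
    (by intro x; simp only [hdvd x N hnN, pow_add, hN, mul_one]) n
  simp only [hdvd _ n dvd_rfl, pow_add] at h
  have h2 : charSum N n v z * z ^ n = charSum N n v z := by
    unfold charSum
    conv_rhs => rw [← h]
    rw [Finset.sum_mul]
    refine Finset.sum_congr rfl fun x _ => ?_
    split_ifs <;> simp
  by_contra h0
  exact hz (mul_left_cancel₀ h0 (by rw [h2, mul_one]))

lemma charSum_ne_zero (N n : ℕ) (v : ℤ) (z : ℂ) (hn : 0 < n) (hN0 : 0 < N) (hnN : n ∣ N)
    (hz : z ^ n = 1) : charSum N n v z ≠ 0 := by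
  have hn' : (0 : ℤ) < n := by exact_mod_cast hn
  obtain ⟨r, hr⟩ := Int.eq_ofNat_of_zero_le (Int.emod_nonneg v hn'.ne')
  have hrlt : r < n := by
    have := Int.emod_lt_of_pos v hn'
    omega
  have hrv : (n : ℤ) ∣ (r : ℤ) - v := by
    rw [← hr]
    exact (Int.emod_emod_of_dvd v dvd_rfl : v % n % n = v % n) |> Int.ModEq.symm |> Int.ModEq.dvd
  have hz0 : z ≠ 0 := by
    rintro rfl
    rw [zero_pow hn.ne'] at hz
    exact zero_ne_one hz
  have h : charSum N n v z =
      ((Finset.range N).filter fun x : ℕ => (n : ℤ) ∣ (x : ℤ) - v).card * z ^ r := by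
    unfold charSum
    rw [← Finset.sum_filter, ← nsmul_eq_mul]
    apply Finset.sum_eq_card_nsmul
    intro x hx
    have hx := (Finset.mem_filter.1 hx).2
    apply pow_eq_pow_of_modEq _ hz
    rw [← Int.natCast_modEq_iff]
    apply Int.modEq_of_dvd
    have := dvd_sub hrv hx
    simpa using this
  rw [h]
  refine mul_ne_zero ?_ (pow_ne_zero _ hz0)
  rw [Nat.cast_ne_zero, Finset.card_ne_zero]
  exact ⟨r, Finset.mem_filter.2
    ⟨Finset.mem_range.2 (hrlt.trans_le (Nat.le_of_dvd hN0 hnN)), hrv⟩⟩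

/-- In a tiling of `ℤ^d` by `k ≥ 2` cosets of Cartesian subgroups, if `j`
maximizes the index product `∏ i, n j i`, then there is another coset whose
moduli are divisible by those of `T j` coordinatewise. -/
theorem maximal_coset_divides_another
    (d k : ℕ) (hd : 1 ≤ d) (hk : 2 ≤ k)
    (v : Fin k → (Fin d → ℤ)) (n : Fin k → Fin d → ℕ)
    (hn : ∀ j i, 0 < n j i)
    (T : Fin k → Set (Fin d → ℤ))
    (hT : ∀ j, T j = {w : Fin d → ℤ | ∀ i, (n j i : ℤ) ∣ (w i - v j i)})
    (hdisj : ∀ j j', j ≠ j' → Disjoint (T j) (T j'))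
    (hcover : (⋃ j, T j) = Set.univ)
    (j : Fin k) (hj : ∀ j', ∏ i, n j' i ≤ ∏ i, n j i) :
    ∃ j', j' ≠ j ∧ ∀ i, n j i ∣ n j' i := by
  classical
  by_contra hcon
  push Not at hcon
  obtain ⟨i0, hi0⟩ : ∃ i, n j i ≠ 1 := by
    by_contra h1
    push Not at h1
    have : Nontrivial (Fin k) := Fin.nontrivial_iff_two_le.2 hk
    obtain ⟨j', hj'⟩ := exists_ne j
    refine Set.disjoint_left.1 (hdisj j' j hj') (?_ : v j' ∈ T j') ?_
    · rw [hT]; simp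
    · rw [hT]; simp [h1]
  set N : ℕ := ∏ a, ∏ i, n a i with hNdef
  have hN0 : 0 < N := Finset.prod_pos fun a _ => Finset.prod_pos fun i _ => hn a i
  have hnN : ∀ a i, n a i ∣ N := fun a i =>
    (Finset.dvd_prod_of_mem (n a) (Finset.mem_univ i)).trans
      (Finset.dvd_prod_of_mem (fun a => ∏ i, n a i) (Finset.mem_univ a))
  have hex : ∀ i, ∃ z : ℂ, IsPrimitiveRoot z (n j i) := fun i =>
    ⟨_, Complex.isPrimitiveRoot_exp (n j i) (hn j i).ne'⟩
  choose z hz using hex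
  have hzN : ∀ i, z i ^ N = 1 := fun i => ((hz i).pow_eq_one_iff_dvd N).2 (hnN j i)
  have hprod : ∀ (m : Fin d → ℕ) (u : Fin d → ℤ), ∏ i, charSum N (m i) (u i) (z i) =
      ∑ w ∈ Fintype.piFinset (fun _ : Fin d => Finset.range N),
        if ∀ i, (m i : ℤ) ∣ (w i : ℤ) - u i then ∏ i, z i ^ w i else 0 := by
    intro m u
    unfold charSum
    rw [Finset.prod_univ_sum]
    refine Finset.sum_congr rfl fun w _ => ?_
    split_ifs with h
    · exact Finset.prod_congr rfl fun i _ => by rw [if_pos (h i)]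
    · push Not at h
      obtain ⟨i, hi⟩ := h
      exact Finset.prod_eq_zero (Finset.mem_univ i) (if_neg hi)
  have htot : ∑ a, ∏ i, charSum N (n a i) (v a i) (z i) =
      ∏ i, charSum N 1 0 (z i) := by
    rw [hprod (fun _ => 1) (fun _ => 0)]
    simp only [hprod]
    rw [Finset.sum_comm]
    refine Finset.sum_congr rfl fun w _ => ?_
    have hw : (fun i => (w i : ℤ)) ∈ ⋃ j, T j := by rw [hcover]; trivial
    obtain ⟨a, ha⟩ := Set.mem_iUnion.1 hw
    rw [Finset.sum_eq_single a]
    · have ha' := ha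
      rw [hT] at ha'
      change ∀ i, (n a i : ℤ) ∣ (w i : ℤ) - v a i at ha'
      rw [if_pos ha', if_pos (by simp)]
    · intro b _ hb
      apply if_neg
      intro hb'
      refine Set.disjoint_left.1 (hdisj b a hb) (?_ : (fun i => (w i : ℤ)) ∈ T b) ha
      rw [hT]; exact hb'
    · simp
  have hR : ∏ i, charSum N 1 0 (z i) = 0 := by
    apply Finset.prod_eq_zero (Finset.mem_univ i0)
    apply charSum_zero _ _ _ _ (one_dvd _) (hzN i0)
    intro h
    exact hi0 (Nat.dvd_one.1 (((hz i0).pow_eq_one_iff_dvd 1).1 h))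
  have hL : ∑ a, ∏ i, charSum N (n a i) (v a i) (z i) =
      ∏ i, charSum N (n j i) (v j i) (z i) := by
    apply Finset.sum_eq_single j
    · intro b _ hb
      obtain ⟨i, hi⟩ := hcon b hb
      apply Finset.prod_eq_zero (Finset.mem_univ i)
      apply charSum_zero _ _ _ _ (hnN b i) (hzN i)
      intro h
      exact hi (((hz i).pow_eq_one_iff_dvd _).1 h)
    · simp
  rw [hL, hR] at htot
  exact Finset.prod_ne_zero_iff.2 (fun i _ =>
    charSum_ne_zero _ _ _ _ (hn j i) hN0 (hnN j i) (hz i).pow_eq_one) htot
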